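/- The affine surface 𝒮₃ is geodesically incomplete: there is no C² curve σ = (x¹,x²) : ℝ → ℝ² satisfying ẍ¹ = (ẋ¹)² + (ẋ²)² and ẍ² = 0 on all of ℝ with σ(0) = (0,0) and σ'(0) = (1,0). -/

import Mathlib

/-! The substitution `w = exp (-x₁)` linearizes the Riccati equation for `x₁'`: along a geodesic
`w'' = ((x₁')² - x₁'') w = -(x₂')² w ≤ 0`, so `w` is concave. Since `w 0 = 1` and `w' 0 = -1`,
the tangent line at `0` gives `w 1 ≤ 1 - 1 = 0`, whereas `w` is positive everywhere. -/

/-- The affine surface 𝒮₃ (nonzero Christoffel symbols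
Γ₁₁¹ = −1, Γ₂₂¹ = −1; geodesic equations ẍ¹ = (ẋ¹)² + (ẋ²)², ẍ² = 0)
is geodesically incomplete: no geodesic defined on all of ℝ starts at
(0,0) with velocity (1,0). -/
theorem S3_geodesically_incomplete :
    ¬ ∃ x₁ x₂ : ℝ → ℝ, ContDiff ℝ 2 x₁ ∧ ContDiff ℝ 2 x₂ ∧
      x₁ 0 = 0 ∧ x₂ 0 = 0 ∧ deriv x₁ 0 = 1 ∧ deriv x₂ 0 = 0 ∧
      (∀ t : ℝ, deriv (deriv x₁) t = (deriv x₁ t) ^ 2 + (deriv x₂ t) ^ 2) ∧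
      (∀ t : ℝ, deriv (deriv x₂) t = 0) := by
  rintro ⟨x, y, hx, -, hx0, -, hv0, -, hode, -⟩
  have hx' : ∀ t, HasDerivAt x (deriv x t) t := fun t =>
    (hx.differentiable (by norm_num) t).hasDerivAt
  have hv' : ∀ t, HasDerivAt (deriv x) (deriv x t ^ 2 + deriv y t ^ 2) t := fun t => by
    rw [← hode t]
    exact (hx.differentiable_deriv_two t).hasDerivAt
  have hw : ∀ t, HasDerivAt (fun s => Real.exp (-x s)) (Real.exp (-x t) * -deriv x t) t :=
    fun t => (hx' t).fun_neg.exp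
  have hp : ∀ t, HasDerivAt (fun s => deriv x s * Real.exp (-x s))
      (deriv y t ^ 2 * Real.exp (-x t)) t := fun t => by
    refine ((hv' t).fun_mul (hw t)).congr_deriv ?_
    ring
  have hmono : Monotone (fun s => deriv x s * Real.exp (-x s)) :=
    monotone_of_hasDerivAt_nonneg hp fun t => by positivity
  -- `w t + t` is nonincreasing for `t ≥ 0`, because `-w' ≥ -w' 0 = 1` there.
  have hq : ∀ t, HasDerivAt (fun s => Real.exp (-x s) + s)
      (Real.exp (-x t) * -deriv x t + 1) t := fun t => (hw t).fun_add (hasDerivAt_id' t)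
  have hanti : AntitoneOn (fun s => Real.exp (-x s) + s) (Set.Ici 0) := by
    refine antitoneOn_of_deriv_nonpos (convex_Ici 0)
      (fun t _ => (hq t).continuousAt.continuousWithinAt)
      (fun t _ => (hq t).differentiableAt.differentiableWithinAt) fun t ht => ?_
    have ht0 : 0 ≤ t := interior_subset ht
    have h1 := hmono ht0
    simp only [hv0, hx0, neg_zero, Real.exp_zero, mul_one] at h1
    rw [(hq t).deriv]
    linarith
  have h := hanti (Set.mem_Ici.2 le_rfl) (Set.mem_Ici.2 zero_le_one) zero_le_one
  simp only [hx0, neg_zero, Real.exp_zero] at h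
  linarith [Real.exp_pos (-x 1)]
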